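/- Let g be a finite-dimensional simple complex Lie algebra with highest root Λ written as Λ = Σᵢ mᵢ αᵢ in the simple roots. If d is an index such that deleting the node d from the Dynkin diagram of g leaves a connected diagram (i.e. g_d is simple), then m_d ≤ 3. -/

import Mathlib

open LieAlgebra LieModule

/-!
Write `θ = ∑ fᵢ αᵢ` for the highest root. The marks satisfy
`2 fᵢ = ∑ⱼ (-⟨αⱼ, αᵢ^∨⟩) fⱼ + ⟨θ, αᵢ^∨⟩`, the sum being over the neighbours `j` of `i`. As
`∑ fᵢ ⟨αᵢ, θ^∨⟩ = 2`, the term `⟨θ, αᵢ^∨⟩ ≥ 0` vanishes when `fᵢ ≥ 3` and is positive at some node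
`u`, where `f u ≤ 2`. Hence marks drop by at most one at each step of a path towards `u`, and
`2 fᵢ ≥ fⱼ` for neighbours `i`, `j`. Summing the relations over a cycle shows that the diagram has
none, so a node `d` whose deletion leaves it connected is a leaf. A leaf with mark `m ≥ 4` is
impossible: on the path from `d` to `u`, the marks either form a nondecreasing arithmetic
progression, which never comes down to `f u ≤ 2`, or run `m, 2m, 2m - 1` with a side branch at `2m`
starting with the mark `m + 1`, whose further neighbours would have marks of total
`2 < (m + 1) / 2`.
-/

section Graph

open SimpleGraph

variable {V : Type*} {G : SimpleGraph V}

lemma exists_two_adj_of_isCycle {v x : V} {c : G.Walk v v} (hc : c.IsCycle) (hx : x ∈ c.support) :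
    ∃ a ∈ c.support, ∃ b ∈ c.support, a ≠ b ∧ G.Adj x a ∧ G.Adj x b := by
  obtain ⟨a, b, hab, hnbr⟩ := Set.ncard_eq_two.1 (hc.ncard_neighborSet_toSubgraph_eq_two hx)
  have ha : c.toSubgraph.Adj x a := hnbr.ge (Set.mem_insert a {b})
  have hb : c.toSubgraph.Adj x b := hnbr.ge (Set.mem_insert_of_mem a rfl)
  exact ⟨a, c.mem_verts_toSubgraph.1 ha.snd_mem, b, c.mem_verts_toSubgraph.1 hb.snd_mem, hab,
    ha.adj_sub, hb.adj_sub⟩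

lemma preconnected_of_reachable_deleteIncidenceSet {d e : V} (hde : G.Adj d e)
    (hd : ∀ a b, a ≠ d → b ≠ d → (G.deleteIncidenceSet d).Reachable a b) : G.Preconnected := by
  have reachable_e (a : V) : G.Reachable a e := by
    rcases eq_or_ne a d with rfl | ha
    · exact hde.reachable
    · exact (hd a e ha hde.ne').mono (G.deleteIncidenceSet_le d)
  exact fun a b ↦ (reachable_e a).trans (reachable_e b).symm

lemma eq_of_adj_of_reachable_deleteIncidenceSet (hG : G.IsAcyclic) {d x y : V}
    (hx : G.Adj d x) (hy : G.Adj d y) (hxy : (G.deleteIncidenceSet d).Reachable x y) : x = y := by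
  by_contra hne
  have hle : G.deleteIncidenceSet d ≤ G.deleteEdges {s(d, x)} := fun a b hab ↦ by
    rw [deleteIncidenceSet_adj] at hab
    simp [deleteEdges_adj, hab.1, hab.2.1, hab.2.2]
  have hdy : (G.deleteEdges {s(d, x)}).Adj d y := by
    simp [deleteEdges_adj, hy, hx.ne, Ne.symm hne]
  exact isAcyclic_iff_forall_adj_isBridge.1 hG hx (hdy.reachable.trans (hxy.mono hle).symm)

end Graph

/-- Integer marks `f` on the vertices of a graph `G` with edge multiplicities: `N v` lists the
neighbours of `v`, each with its multiplicity as seen from `v`. This abstracts the coefficients of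
the highest root `θ` on a Dynkin diagram, where `w` occurs `-⟨α_w, α_v^∨⟩` times in `N v`, the
defect `2 f v - ∑ w ∈ N v, f w` is `⟨θ, α_v^∨⟩`, and `u` is a node with positive defect. -/
structure IsMarking {V : Type*} (G : SimpleGraph V) (N : V → Multiset V) (f : V → ℤ) (u : V) :
    Prop where
  mem_iff (v w : V) : w ∈ N v ↔ G.Adj v w
  pos (v : V) : 0 < f v
  sum_le (v : V) : ((N v).map f).sum ≤ 2 * f v
  sum_eq (v : V) : 3 ≤ f v → ((N v).map f).sum = 2 * f v
  le_two : f u ≤ 2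
  sum_lt : ((N u).map f).sum < 2 * f u

namespace IsMarking

open SimpleGraph

variable {V : Type*} {G : SimpleGraph V} {N : V → Multiset V} {f : V → ℤ} {u : V}

section Local

variable (hM : IsMarking G N f u)
include hM

lemma sum_map_nonneg (t : Multiset V) : 0 ≤ (t.map f).sum :=
  Multiset.sum_nonneg fun _ hx ↦ by
    obtain ⟨v, -, rfl⟩ := Multiset.mem_map.1 hx
    exact (hM.pos v).le

lemma le_sum_of_adj {v w : V} (h : G.Adj v w) : f w ≤ ((N v).map f).sum := by
  obtain ⟨t, ht⟩ := Multiset.exists_cons_of_mem ((hM.mem_iff v w).2 h)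
  rw [ht, Multiset.map_cons, Multiset.sum_cons]
  exact le_add_of_nonneg_right (hM.sum_map_nonneg t)

lemma le_two_mul_of_adj {v w : V} (h : G.Adj v w) : f v ≤ 2 * f w :=
  (hM.le_sum_of_adj h.symm).trans (hM.sum_le w)

lemma sum_eq_zero_or_le_two_mul_sum {v : V} {t : Multiset V} (ht : t ≤ N v) :
    (t.map f).sum = 0 ∨ f v ≤ 2 * (t.map f).sum := by
  rcases t.empty_or_exists_mem with rfl | ⟨w, hw⟩
  · simp
  · right
    have hvw := hM.le_two_mul_of_adj ((hM.mem_iff v w).1 (Multiset.mem_of_le ht hw))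
    obtain ⟨t, rfl⟩ := Multiset.exists_cons_of_mem hw
    have := hM.sum_map_nonneg t
    simp only [Multiset.map_cons, Multiset.sum_cons]
    lia

lemma exists_eq_cons_cons {v p q : V} (hp : G.Adj v p) (hq : G.Adj v q) (hpq : p ≠ q) :
    ∃ t, N v = p ::ₘ q ::ₘ t := by
  obtain ⟨t, ht⟩ := Multiset.exists_cons_of_mem ((hM.mem_iff v p).2 hp)
  have hqt : q ∈ t := by
    simpa [ht, hpq.symm] using (hM.mem_iff v q).2 hq
  obtain ⟨t, rfl⟩ := Multiset.exists_cons_of_mem hqt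
  exact ⟨t, ht⟩

lemma add_le_two_mul {v p q : V} (hp : G.Adj v p) (hq : G.Adj v q) (hpq : p ≠ q) :
    f p + f q ≤ 2 * f v := by
  obtain ⟨t, ht⟩ := hM.exists_eq_cons_cons hp hq hpq
  have hle := hM.sum_le v
  have := hM.sum_map_nonneg t
  simp only [ht, Multiset.map_cons, Multiset.sum_cons] at hle
  lia

lemma exists_add_add_sum_eq {v p q : V} (hv : 3 ≤ f v) (hp : G.Adj v p) (hq : G.Adj v q)
    (hpq : p ≠ q) : ∃ t ≤ N v, f p + f q + (t.map f).sum = 2 * f v := by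
  obtain ⟨t, ht⟩ := hM.exists_eq_cons_cons hp hq hpq
  refine ⟨t, ?_, ?_⟩
  · rw [ht]
    exact (Multiset.le_cons_self t q).trans (Multiset.le_cons_self _ p)
  · rw [← hM.sum_eq v hv, ht, Multiset.map_cons, Multiset.map_cons, Multiset.sum_cons,
      Multiset.sum_cons, add_assoc]

lemma two_mul_ne_add_two_of_adj {v w : V} (hv : 6 < f v) (h : G.Adj v w) :
    2 * f w ≠ f v + 2 := by
  intro hw
  obtain ⟨t, ht⟩ := Multiset.exists_cons_of_mem ((hM.mem_iff w v).2 h.symm)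
  have hsum := hM.sum_eq w (by lia)
  rw [ht, Multiset.map_cons, Multiset.sum_cons] at hsum
  rcases hM.sum_eq_zero_or_le_two_mul_sum (ht ▸ Multiset.le_cons_self t v) with ht₀ | ht₀ <;> lia

lemma card_mul_eq_of_forall_adj_eq {v w : V} (hv : 3 ≤ f v) (hw : ∀ x, G.Adj v x → x = w) :
    (N v).card * f w = 2 * f v := by
  have hN : N v = Multiset.replicate (N v).card w :=
    Multiset.eq_replicate_of_mem fun x hx ↦ hw x ((hM.mem_iff v x).1 hx)
  rw [← hM.sum_eq v hv, hN, Multiset.map_replicate, Multiset.sum_replicate,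
    Multiset.card_replicate, nsmul_eq_mul]

lemma exists_adj {v : V} (hv : 3 ≤ f v) : ∃ w, G.Adj v w := by
  by_contra! h
  have hsum := hM.sum_eq v hv
  rw [Multiset.eq_zero_of_forall_notMem fun w hw ↦ h w ((hM.mem_iff v w).1 hw),
    Multiset.map_zero, Multiset.sum_zero] at hsum
  lia

end Local

section Path

variable (hM : IsMarking G N f u)
include hM

lemma le_add_one_of_isPath {p v : V} (h : G.Adj p v) (w : G.Walk v u)
    (hw : (Walk.cons h w).IsPath) : f p ≤ f v + 1 := by
  induction w generalizing p with
  | nil =>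
    have := hM.le_sum_of_adj h.symm
    have := hM.sum_lt
    have := hM.le_two
    lia
  | @cons v q _ hvq w ih =>
    have hpq : p ≠ q := by
      rintro rfl
      simp [Walk.cons_isPath_iff] at hw
    have := ih hM hvq hw.of_cons
    have := hM.add_le_two_mul h.symm hvq hpq
    lia

/-- A nondecreasing arithmetic progression of marks that are large compared to its step never
branches, hence cannot end at `u`. -/
lemma ne_add_of_isPath {k : ℤ} (hk : 0 ≤ k) {p v : V} (h : G.Adj p v) (w : G.Walk v u)
    (hw : (Walk.cons h w).IsPath) (hkv : 2 * (k + 1) < f v) : f v ≠ f p + k := by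
  induction w generalizing p with
  | nil =>
    have := hM.le_two
    lia
  | @cons v q _ hvq w ih =>
    intro hpv
    have hpq : p ≠ q := by
      rintro rfl
      simp [Walk.cons_isPath_iff] at hw
    obtain ⟨t, htv, ht⟩ := hM.exists_add_add_sum_eq (by lia) h.symm hvq hpq
    have hvq_le : f v ≤ f q + 1 := hM.le_add_one_of_isPath hvq w hw.of_cons
    have hqv : f q = f v + k := by
      rcases hM.sum_eq_zero_or_le_two_mul_sum htv with ht₀ | ht₀ <;> lia
    exact ih hM hvq hw.of_cons (by lia) hqv

lemma ne_two_mul_of_isPath {d e : V} (hd : 4 ≤ f d) (h : G.Adj d e) (w : G.Walk e u)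
    (hw : (Walk.cons h w).IsPath) : f e ≠ 2 * f d := by
  intro he
  cases w with
  | nil =>
    have := hM.le_two
    lia
  | @cons _ q _ heq w =>
    have hdq : d ≠ q := by
      rintro rfl
      simp [Walk.cons_isPath_iff] at hw
    obtain ⟨t, hte, ht⟩ := hM.exists_add_add_sum_eq (by lia) h.symm heq hdq
    have heq_le : f e ≤ f q + 1 := hM.le_add_one_of_isPath heq w hw.of_cons
    have flat : f q ≠ 2 * f d := fun hq ↦
      hM.ne_add_of_isPath le_rfl heq w hw.of_cons (by lia) (by lia)
    have steep : f q ≠ 3 * f d := fun hq ↦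
      hM.ne_add_of_isPath (hM.pos d).le heq w hw.of_cons (by lia) (by lia)
    have hsum : (t.map f).sum = f d + 1 := by
      rcases hM.sum_eq_zero_or_le_two_mul_sum hte with ht₀ | ht₀ <;> lia
    obtain ⟨x, hxt⟩ : ∃ x, x ∈ t := by
      refine Multiset.exists_mem_of_ne_zero ?_
      rintro rfl
      simp only [Multiset.map_zero, Multiset.sum_zero] at hsum
      lia
    have hex : G.Adj e x := (hM.mem_iff e x).1 (Multiset.mem_of_le hte hxt)
    have hx : f x = f d + 1 := by
      obtain ⟨t, rfl⟩ := Multiset.exists_cons_of_mem hxt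
      rw [Multiset.map_cons, Multiset.sum_cons] at hsum
      have := hM.le_two_mul_of_adj hex
      rcases hM.sum_eq_zero_or_le_two_mul_sum ((Multiset.le_cons_self t x).trans hte) with
        ht₀ | ht₀ <;> lia
    exact hM.two_mul_ne_add_two_of_adj (by lia) hex (by lia)

end Path

section Acyclic

variable (hM : IsMarking G N f u)
include hM

lemma sum_filter_adj_le_sum [DecidableRel G.Adj] (S : Finset V) (v : V) :
    ∑ w ∈ S with G.Adj v w, f w ≤ ((N v).map f).sum := by
  have hle : (S.filter (G.Adj v)).val ≤ N v :=
    (Multiset.le_iff_subset (Finset.nodup _)).2 fun w hw ↦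
      (hM.mem_iff v w).2 (Finset.mem_filter.1 hw).2
  obtain ⟨t, ht⟩ := Multiset.le_iff_exists_add.1 hle
  rw [ht, Multiset.map_add, Multiset.sum_add]
  exact le_add_of_nonneg_right (hM.sum_map_nonneg t)

/-- Summing `∑ w ∈ S with G.Adj v w, f w ≤ 2 * f v` over `v ∈ S` counts each `f w` at least twice
on the left, so all these inequalities are equalities. -/
lemma sum_filter_adj_eq [DecidableRel G.Adj] {S : Finset V}
    (hS : ∀ v ∈ S, ∃ a ∈ S, ∃ b ∈ S, a ≠ b ∧ G.Adj v a ∧ G.Adj v b) {v : V} (hv : v ∈ S) :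
    ∑ w ∈ S with G.Adj v w, f w = 2 * f v := by
  have hle : ∀ v ∈ S, ∑ w ∈ S with G.Adj v w, f w ≤ 2 * f v := fun v _ ↦
    (hM.sum_filter_adj_le_sum S v).trans (hM.sum_le v)
  have two_le_card : ∀ w ∈ S, 2 ≤ (S.filter (G.Adj w)).card := by
    intro w hw
    obtain ⟨a, ha, b, hb, hab, hwa, hwb⟩ := hS w hw
    exact Finset.one_lt_card.2 ⟨a, by simp [ha, hwa], b, by simp [hb, hwb], hab⟩
  refine (Finset.sum_eq_sum_iff_of_le hle).1 (le_antisymm (Finset.sum_le_sum hle) ?_) v hv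
  calc ∑ w ∈ S, 2 * f w
      ≤ ∑ w ∈ S, ∑ _ ∈ S.filter (G.Adj w), f w := by
        refine Finset.sum_le_sum fun w hw ↦ ?_
        rw [Finset.sum_const, nsmul_eq_mul]
        exact mul_le_mul_of_nonneg_right (mod_cast two_le_card w hw) (hM.pos w).le
    _ = ∑ v ∈ S, ∑ w ∈ S with G.Adj v w, f w :=
        Finset.sum_comm' fun v w ↦ by simp only [Finset.mem_filter, G.adj_comm]; tauto

lemma eq_empty_of_forall_two_adj (hG : G.Preconnected) {S : Finset V}
    (hS : ∀ v ∈ S, ∃ a ∈ S, ∃ b ∈ S, a ≠ b ∧ G.Adj v a ∧ G.Adj v b) : S = ∅ := by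
  classical
  have mem_of_adj {v x : V} (hv : v ∈ S) (hvx : G.Adj v x) : x ∈ S := by
    by_contra hx
    have hle := (hM.sum_filter_adj_le_sum (insert x S) v).trans (hM.sum_le v)
    rw [Finset.filter_insert, if_pos hvx, Finset.sum_insert (by simp [hx]),
      hM.sum_filter_adj_eq hS hv] at hle
    have := hM.pos x
    lia
  have u_notMem : u ∉ S := fun hu ↦
    ((hM.sum_filter_adj_le_sum S u).trans_lt hM.sum_lt).ne (hM.sum_filter_adj_eq hS hu)
  refine Finset.eq_empty_of_forall_notMem fun v hv ↦ u_notMem ?_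
  have mem_of_reflTransGen {x : V} (hvx : Relation.ReflTransGen G.Adj v x) : x ∈ S := by
    induction hvx with
    | refl => exact hv
    | tail _ hadj hmem => exact mem_of_adj hmem hadj
  exact mem_of_reflTransGen ((reachable_iff_reflTransGen v u).1 (hG v u))

lemma isAcyclic (hG : G.Preconnected) : G.IsAcyclic := by
  classical
  intro v c hc
  have hempty := hM.eq_empty_of_forall_two_adj hG (S := c.support.toFinset) fun x hx ↦ by
    simpa only [List.mem_toFinset] using exists_two_adj_of_isCycle hc (List.mem_toFinset.1 hx)
  simp at hempty

end Acyclic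

theorem le_three (hM : IsMarking G N f u) {d : V}
    (hd : ∀ a b, a ≠ d → b ≠ d → (G.deleteIncidenceSet d).Reachable a b) : f d ≤ 3 := by
  by_contra! hfd
  obtain ⟨e, hde⟩ := hM.exists_adj (v := d) (by lia)
  have hG : G.Preconnected := preconnected_of_reachable_deleteIncidenceSet hde hd
  have eq_e (x : V) (hx : G.Adj d x) : x = e :=
    eq_of_adj_of_reachable_deleteIncidenceSet (hM.isAcyclic hG) hx hde (hd x e hx.ne' hde.ne')
  have hsum := hM.card_mul_eq_of_forall_adj_eq (by lia) eq_e
  obtain ⟨w, hw⟩ := (hG d u).exists_isPath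
  cases w with
  | nil =>
    have := hM.le_two
    lia
  | @cons _ v _ h w =>
    obtain rfl := eq_e v h
    have hle := hM.le_add_one_of_isPath h w hw
    have hne_flat := hM.ne_add_of_isPath le_rfl h w hw
    have hne_steep := hM.ne_two_mul_of_isPath (by lia) h w hw
    obtain hcard | hcard | hcard | hcard : (N d).card = 0 ∨ (N d).card = 1 ∨ (N d).card = 2 ∨
      3 ≤ (N d).card := by lia
    · simp only [hcard, Nat.cast_zero] at hsum; lia
    · simp only [hcard, Nat.cast_one] at hsum; lia
    · simp only [hcard, Nat.cast_ofNat] at hsum; lia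
    · have : (3 : ℤ) * f v ≤ 2 * f d :=
        hsum ▸ mul_le_mul_of_nonneg_right (mod_cast hcard) (hM.pos v).le
      lia

end IsMarking

section RootPairing

variable {ι κ R M N : Type*} [CommRing R] [AddCommGroup M] [Module R M] [AddCommGroup N]
  [Module R N]

/-- A system of simple roots `s` of a root pairing, indexed by an arbitrary type of nodes, together
with the integral coordinates `c i` of each root `i` with respect to it. Compared with
`RootPairing.Base`, the coordinates are data and nothing is required of the coroots. -/
structure IsSimpleSystem [Fintype κ] (P : RootPairing ι R M N) (s : κ → ι) (c : ι → κ → ℤ) :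
    Prop where
  linearIndependent : LinearIndependent R fun j ↦ P.root (s j)
  root_eq_sum (i : ι) : P.root i = ∑ j, c i j • P.root (s j)
  nonneg_or_nonpos (i : ι) : 0 ≤ c i ∨ c i ≤ 0

/-- The Dynkin diagram of a family `s` of simple roots, without its edge multiplicities. -/
def dynkinGraph (P : RootPairing ι R M N) [P.IsCrystallographic] (s : κ → ι) : SimpleGraph κ :=
  SimpleGraph.fromRel fun i j ↦ P.pairingIn ℤ (s i) (s j) ≠ 0

/-- The neighbours of the node `i` in the Dynkin diagram of a family `s` of simple roots, each `j`
with multiplicity `-⟨α_j, α_i^∨⟩`. This number is nonnegative for `j ≠ i`, and `Int.toNat` discards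
`j = i`, where it is `-2`. -/
noncomputable def dynkinNbrs [Fintype κ] (P : RootPairing ι R M N) [P.IsCrystallographic]
    (s : κ → ι) (i : κ) : Multiset κ :=
  ∑ j, Multiset.replicate (-P.pairingIn ℤ (s j) (s i)).toNat j

namespace IsSimpleSystem

variable [Fintype κ] {P : RootPairing ι R M N} {s : κ → ι} {c : ι → κ → ℤ} [CharZero R]

section Coordinates

variable (hS : IsSimpleSystem P s c)
include hS

lemma coeff_eq {k : ι} {x : κ → ℤ} (hx : P.root k = ∑ j, x j • P.root (s j)) : c k = x :=
  funext <| Fintype.linearIndependent_iffₛ.1 (hS.linearIndependent.restrict_scalars' ℤ) _ _ <|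
    (hS.root_eq_sum k).symm.trans hx

lemma coeff_simple [DecidableEq κ] (i : κ) : c (s i) = Pi.single i 1 :=
  hS.coeff_eq <| by simp [Pi.single_apply, ite_smul]

lemma root_simple_add_ne_zero {i j : κ} (hij : i ≠ j) : P.root (s i) + P.root (s j) ≠ 0 := by
  classical
  intro h
  have := Fintype.linearIndependent_iff.1 hS.linearIndependent (Pi.single i 1 + Pi.single j 1)
    (by simpa [add_smul, Finset.sum_add_distrib, Pi.single_apply, ite_smul] using h) i
  simp [hij] at this

lemma coeff_eq_add {k i j : ι} (h : P.root k = P.root i + P.root j) : c k = c i + c j :=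
  hS.coeff_eq <| by
    simp only [h, hS.root_eq_sum i, hS.root_eq_sum j, Pi.add_apply, add_smul,
      Finset.sum_add_distrib]

lemma coeff_reflectionPerm [DecidableEq κ] [P.IsCrystallographic] (i : κ) (k : ι) :
    c (P.reflectionPerm (s i) k) = c k - Pi.single i (P.pairingIn ℤ k (s i)) :=
  hS.coeff_eq <| by
    rw [P.root_reflectionPerm, P.reflection_apply_root' ℤ]
    simp only [Pi.sub_apply, sub_smul, Finset.sum_sub_distrib, ← hS.root_eq_sum k,
      Pi.single_apply, ite_smul, zero_smul, Finset.sum_ite_eq', Finset.mem_univ, if_true]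

end Coordinates

section Pairing

variable [P.IsCrystallographic] (hS : IsSimpleSystem P s c)
include hS

lemma pairingIn_eq_sum (k i : ι) :
    P.pairingIn ℤ k i = ∑ j, c k j * P.pairingIn ℤ (s j) i := by
  apply (algebraMap ℤ R).injective_int
  rw [P.algebraMap_pairingIn, map_sum, ← P.root_coroot'_eq_pairing, hS.root_eq_sum k, map_sum]
  refine Finset.sum_congr rfl fun j _ ↦ ?_
  rw [map_mul, P.algebraMap_pairingIn, map_zsmul, P.root_coroot'_eq_pairing, zsmul_eq_mul,
    eq_intCast]

lemma pairingIn_simple_le_zero {i j : κ} (hij : i ≠ j) : P.pairingIn ℤ (s i) (s j) ≤ 0 := by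
  classical
  have hc := hS.coeff_reflectionPerm j (s i)
  rw [hS.coeff_simple] at hc
  rcases hS.nonneg_or_nonpos (P.reflectionPerm (s j) (s i)) with h | h
  · simpa [hc, hij.symm] using h j
  · simpa [hc, hij] using h i

lemma pairingIn_simple_ne_zero {i j : κ} (hij : i ≠ j) {k : ι}
    (hk : P.root k = P.root (s i) + P.root (s j)) : P.pairingIn ℤ (s i) (s j) ≠ 0 := by
  classical
  intro h₀
  have hpair : P.pairingIn ℤ k (s j) = 2 := by
    apply (algebraMap ℤ R).injective_int
    rw [P.algebraMap_pairingIn, RootPairing.pairing_eq_add_of_root_eq_add hk, P.pairing_same,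
      ← P.algebraMap_pairingIn ℤ, h₀]
    simp
  have hc := hS.coeff_reflectionPerm j k
  rw [hS.coeff_eq_add hk, hS.coeff_simple, hS.coeff_simple, hpair] at hc
  rcases hS.nonneg_or_nonpos (P.reflectionPerm (s j) k) with h | h
  · simpa [hc, hij.symm] using h j
  · simpa [hc, hij] using h i

lemma sum_map_coeff_dynkinNbrs (k : ι) (i : κ) :
    ((dynkinNbrs P s i).map (c k)).sum = 2 * c k i - P.pairingIn ℤ k (s i) := by
  classical
  have hmult (j : κ) : ((-P.pairingIn ℤ (s j) (s i)).toNat : ℤ) =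
      (if j = i then 2 else 0) - P.pairingIn ℤ (s j) (s i) := by
    split_ifs with hij
    · simp [hij]
    · have := hS.pairingIn_simple_le_zero hij
      lia
  have hsum : ((dynkinNbrs P s i).map (c k)).sum =
      ∑ j, c k j * (-P.pairingIn ℤ (s j) (s i)).toNat := by
    rw [dynkinNbrs, ← Multiset.coe_mapAddMonoidHom, map_sum, ← Multiset.coe_sumAddMonoidHom,
      map_sum]
    simp [mul_comm]
  simp only [hsum, hmult, mul_sub, Finset.sum_sub_distrib, mul_ite, mul_zero, Finset.sum_ite_eq',
    Finset.mem_univ, if_true, ← hS.pairingIn_eq_sum, mul_comm]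

lemma mem_dynkinNbrs [Finite ι] (i j : κ) :
    j ∈ dynkinNbrs P s i ↔ (dynkinGraph P s).Adj i j := by
  have hmem : j ∈ dynkinNbrs P s i ↔ P.pairingIn ℤ (s j) (s i) < 0 := by
    simp [dynkinNbrs, Multiset.mem_sum, Multiset.mem_replicate]
  rw [hmem, dynkinGraph, SimpleGraph.fromRel_adj]
  rcases eq_or_ne i j with rfl | hij
  · simp
  · have hneg := P.pairingIn_lt_zero_iff ℤ (i := s i) (j := s j)
    have := hS.pairingIn_simple_le_zero hij
    have := hS.pairingIn_simple_le_zero hij.symm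
    lia

end Pairing

section Highest

variable (hS : IsSimpleSystem P s c) {θ : ι} (hθ : ∀ i, c i ≤ c θ)
include hS hθ

lemma one_le_coeff_highest (i : κ) : 1 ≤ c θ i := by
  classical
  simpa [hS.coeff_simple] using hθ (s i) i

variable [P.IsCrystallographic]

lemma pairingIn_highest_nonneg (i : κ) : 0 ≤ P.pairingIn ℤ θ (s i) := by
  classical
  simpa [hS.coeff_reflectionPerm] using hθ (P.reflectionPerm (s i) θ) i

variable [Finite ι]

lemma pairingIn_simple_highest_nonneg (i : κ) : 0 ≤ P.pairingIn ℤ (s i) θ :=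
  not_lt.1 <| mt (P.pairingIn_lt_zero_iff ℤ).1 (hS.pairingIn_highest_nonneg hθ i).not_gt

lemma exists_pairingIn_highest_pos : ∃ u, 0 < P.pairingIn ℤ θ (s u) := by
  by_contra! h
  have hzero (i : κ) : P.pairingIn ℤ (s i) θ = 0 :=
    le_antisymm (not_lt.1 <| mt (P.zero_lt_pairingIn_iff' ℤ).1 (h i).not_gt)
      (hS.pairingIn_simple_highest_nonneg hθ i)
  have := hS.pairingIn_eq_sum θ θ
  simp [hzero] at this

lemma coeff_highest_le_two {i : κ} (hi : 0 < P.pairingIn ℤ θ (s i)) : c θ i ≤ 2 :=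
  calc c θ i ≤ c θ i * P.pairingIn ℤ (s i) θ :=
        le_mul_of_one_le_right (by linarith [hS.one_le_coeff_highest hθ i])
          ((P.zero_lt_pairingIn_iff' ℤ).1 hi)
    _ ≤ ∑ j, c θ j * P.pairingIn ℤ (s j) θ :=
        Finset.single_le_sum (f := fun j ↦ c θ j * P.pairingIn ℤ (s j) θ)
          (fun j _ ↦ mul_nonneg (by linarith [hS.one_le_coeff_highest hθ j])
            (hS.pairingIn_simple_highest_nonneg hθ j)) (Finset.mem_univ i)
    _ = 2 := by rw [← hS.pairingIn_eq_sum, P.pairingIn_same]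

lemma isMarking {u : κ} (hu : 0 < P.pairingIn ℤ θ (s u)) :
    IsMarking (dynkinGraph P s) (dynkinNbrs P s) (c θ) u where
  mem_iff := hS.mem_dynkinNbrs
  pos := hS.one_le_coeff_highest hθ
  sum_le i := by
    have := hS.pairingIn_highest_nonneg hθ i
    rw [hS.sum_map_coeff_dynkinNbrs]
    lia
  sum_eq i hi := by
    have := hS.pairingIn_highest_nonneg hθ i
    have := mt (hS.coeff_highest_le_two hθ) (by lia : ¬ c θ i ≤ 2)
    rw [hS.sum_map_coeff_dynkinNbrs]
    lia
  le_two := hS.coeff_highest_le_two hθ hu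
  sum_lt := by
    rw [hS.sum_map_coeff_dynkinNbrs]
    lia

theorem coeff_highest_le_three {d : κ}
    (hd : ∀ a b, a ≠ d → b ≠ d → ((dynkinGraph P s).deleteIncidenceSet d).Reachable a b) :
    c θ d ≤ 3 := by
  obtain ⟨u, hu⟩ := hS.exists_pairingIn_highest_pos hθ
  exact (hS.isMarking hθ hu).le_three hd

end Highest

end IsSimpleSystem

end RootPairing

section Lie

open LieAlgebra.IsKilling

variable {K L κ : Type*} [Field K] [CharZero K] [LieRing L] [LieAlgebra K L]
  [FiniteDimensional K L] [IsKilling K L] {H : LieSubalgebra K L} [H.IsCartanSubalgebra]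
  [IsTriangularizable K H L] [Fintype κ]

lemma isSimpleSystem_rootSystem {s : κ → H.root}
    (hs : LinearIndependent K fun i ↦ ((s i).1 : H → K)) {c : Weight K H L → κ → ℤ}
    (hc : ∀ w : Weight K H L, (w : H → K) = ∑ i, (c w i : K) • ((s i).1 : H → K))
    (hsign : ∀ w : Weight K H L, w.IsNonZero → (∀ i, 0 ≤ c w i) ∨ ∀ i, c w i ≤ 0) :
    IsSimpleSystem (rootSystem H) s fun k ↦ c k.1 where
  linearIndependent := LinearIndependent.of_comp (LinearMap.ltoFun K H K K) hs
  root_eq_sum k := by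
    ext x
    simpa using congrFun (hc k.1) x
  nonneg_or_nonpos k := hsign k.1 (LieSubalgebra.isNonZero_coe_root k)

lemma dynkinGraph_adj_of_coe_eq_add {s : κ → H.root} {c : H.root → κ → ℤ}
    (hS : IsSimpleSystem (rootSystem H) s c) {i j : κ} (hij : i ≠ j) {w : Weight K H L}
    (hw : (w : H → K) = ((s i).1 : H → K) + ((s j).1 : H → K)) :
    (dynkinGraph (rootSystem H) s).Adj i j := by
  have hw₀ : w.IsNonZero := fun h ↦ hS.root_simple_add_ne_zero hij <| by
    ext x
    simpa using congrFun (hw.symm.trans h) x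
  have hroot : (rootSystem H).root ⟨w, by simpa using hw₀⟩ =
      (rootSystem H).root (s i) + (rootSystem H).root (s j) := by
    ext x
    simpa using congrFun hw x
  exact (SimpleGraph.fromRel_adj _ i j).2 ⟨hij, .inl (hS.pairingIn_simple_ne_zero hij hroot)⟩

end Lie

theorem stmt4_general {K : Type*} [Field K] [CharZero K]
    (L : Type*) [LieRing L] [LieAlgebra K L] [FiniteDimensional K L] [IsKilling K L]
    (H : LieSubalgebra K L) [H.IsCartanSubalgebra] [IsTriangularizable K H L]
    {κ : Type*} [Fintype κ] (α : κ → Weight K H L)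
    (hα : ∀ i, (α i).IsNonZero)
    (hind : LinearIndependent K (fun i => ((α i : H → K))))
    (c : Weight K H L → κ → ℤ)
    (hc : ∀ w : Weight K H L, (w : H → K) = ∑ i, (c w i : K) • (α i : H → K))
    (hbase : ∀ w : Weight K H L, w.IsNonZero → (∀ i, 0 ≤ c w i) ∨ (∀ i, c w i ≤ 0))
    (Λw : Weight K H L) (hΛne : Λw.IsNonZero)
    (hΛ : ∀ (w : Weight K H L) (i : κ), c w i ≤ c Λw i)
    (d : κ)
    (hconn : ∀ a b : κ, a ≠ d → b ≠ d →
      Relation.ReflTransGen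
        (fun i j : κ => i ≠ d ∧ j ≠ d ∧ i ≠ j ∧
          ∃ w : Weight K H L, (w : H → K) = (α i : H → K) + (α j : H → K))
        a b) :
    c Λw d ≤ 3 := by
  let s (i : κ) : H.root := ⟨α i, by simpa using hα i⟩
  have hS := isSimpleSystem_rootSystem (s := s) hind hc hbase
  refine hS.coeff_highest_le_three (θ := ⟨Λw, by simpa using hΛne⟩) (fun k ↦ hΛ k.1)
    fun a b ha hb ↦ (SimpleGraph.reachable_iff_reflTransGen a b).2 ?_
  refine Relation.ReflTransGen.mono ?_ a b (hconn a b ha hb)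
  rintro i j ⟨hi, hj, hij, w, hw⟩
  exact SimpleGraph.deleteIncidenceSet_adj.2 ⟨dynkinGraph_adj_of_coe_eq_add hS hij hw, hi, hj⟩

/-- Let `L` be a finite-dimensional simple complex Lie algebra with highest root
`Λw = Σᵢ mᵢ αᵢ` (coefficients `m i = c Λw i` with respect to the base of simple roots).  Two
nodes `a b` of the Dynkin diagram are adjacent iff `α a + α b` is a root.  If `d` is an index
such that deleting node `d` leaves a connected diagram (any two remaining nodes are joined by
a path avoiding `d`), i.e. the Levi subalgebra `g_d` is simple, then `m d ≤ 3`. -/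
theorem stmt4
    (L : Type) [LieRing L] [LieAlgebra ℂ L] [FiniteDimensional ℂ L] [LieAlgebra.IsSimple ℂ L]
    (H : LieSubalgebra ℂ L) [H.IsCartanSubalgebra]
    (l : ℕ) (α : Fin l → LieModule.Weight ℂ H L)
    (hα : ∀ i, (α i).IsNonZero)
    (hind : LinearIndependent ℂ (fun i => ((α i : H → ℂ))))
    (c : LieModule.Weight ℂ H L → Fin l → ℤ)
    (hc : ∀ w : LieModule.Weight ℂ H L, (w : H → ℂ) = ∑ i, (c w i : ℂ) • (α i : H → ℂ))
    (hbase : ∀ w : LieModule.Weight ℂ H L, w.IsNonZero →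
      (∀ i, 0 ≤ c w i) ∨ (∀ i, c w i ≤ 0))
    (Λw : LieModule.Weight ℂ H L) (hΛne : Λw.IsNonZero)
    (hΛ : ∀ (w : LieModule.Weight ℂ H L) (i : Fin l), c w i ≤ c Λw i)
    (d : Fin l)
    (hconn : ∀ a b : Fin l, a ≠ d → b ≠ d →
      Relation.ReflTransGen
        (fun i j : Fin l => i ≠ d ∧ j ≠ d ∧ i ≠ j ∧
          ∃ w : LieModule.Weight ℂ H L, (w : H → ℂ) = (α i : H → ℂ) + (α j : H → ℂ))
        a b) :
    c Λw d ≤ 3 := by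
  exact stmt4_general L H α hα hind c hc hbase Λw hΛne hΛ d hconn
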